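/- arXiv:1603.07113 — 9 statements merged into one kernel-verified Lean document; each statement's English description precedes it below -/
import Mathlib

section
/- Let n ≥ 2 be an integer, λ > 0 a real number, and s, t real numbers. Define the complex numbers a_n = ((n+1)/2)·e^{i(n−1)t} − ((n−1)/2)·e^{i(s+(n−2)t)} and a_{2n−1} = n·e^{2i(n−1)t} − (n−1)·e^{i(s+(2n−3)t)}. Then 4[λ(Re a_n)² − Re a_{2n−1}] − 4n ≤ F_{n,λ}(cos((n−1)t), cos(s+(n−2)t)). -/
/-- The function `F_{n,λ}(u,v)` from Lemma 4 of Li–Ponnusamy. -/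
noncomputable def Ff (n : ℕ) (lam u v : ℝ) : ℝ :=
  (((n : ℝ) + 1) ^ 2 * lam - 8 * n) * u ^ 2
    - 2 * ((n : ℝ) - 1) * (((n : ℝ) + 1) * lam - 2) * u * v
    + 4 * ((n : ℝ) - 1) * Real.sqrt (1 - u ^ 2) * Real.sqrt (1 - v ^ 2)
    + ((n : ℝ) - 1) ^ 2 * lam * v ^ 2

theorem zalcman_functional_extreme_point_bound
    (n : ℕ) (hn : 2 ≤ n) (lam : ℝ) (hlam : 0 < lam) (s t : ℝ)
    (an a2n1 : ℂ)
    (han : an = (((n : ℂ) + 1) / 2) * Complex.exp (Complex.I * ((((n : ℝ) - 1) * t : ℝ) : ℂ))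
        - (((n : ℂ) - 1) / 2) * Complex.exp (Complex.I * ((s + ((n : ℝ) - 2) * t : ℝ) : ℂ)))
    (ha2n1 : a2n1 = (n : ℂ) * Complex.exp (2 * Complex.I * ((((n : ℝ) - 1) * t : ℝ) : ℂ))
        - ((n : ℂ) - 1) * Complex.exp (Complex.I * ((s + (2 * (n : ℝ) - 3) * t : ℝ) : ℂ))) :
    4 * (lam * an.re ^ 2 - a2n1.re) - 4 * (n : ℝ) ≤
      Ff n lam (Real.cos (((n : ℝ) - 1) * t)) (Real.cos (s + ((n : ℝ) - 2) * t)) := by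
  have hn1 : (1 : ℝ) ≤ n := by exact_mod_cast (by omega : 1 ≤ n)
  have key : ∀ (c x : ℝ), ((c : ℂ) * Complex.exp (Complex.I * (x : ℂ))).re = c * Real.cos x := by
    intro c x
    rw [Complex.re_ofReal_mul, mul_comm Complex.I, Complex.exp_ofReal_mul_I_re]
  have h1 : an.re = ((n : ℝ) + 1) / 2 * Real.cos (((n : ℝ) - 1) * t)
      - ((n : ℝ) - 1) / 2 * Real.cos (s + ((n : ℝ) - 2) * t) := by
    rw [han, Complex.sub_re, ← key, ← key]
    push_cast
    rfl
  have h2 : a2n1.re = (n : ℝ) * Real.cos (2 * (((n : ℝ) - 1) * t))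
      - ((n : ℝ) - 1) * Real.cos (((n : ℝ) - 1) * t + (s + ((n : ℝ) - 2) * t)) := by
    rw [ha2n1, Complex.sub_re, ← key, ← key]
    push_cast
    congr 4 <;> ring_nf
  rw [h1, h2, Real.cos_two_mul, Real.cos_add (((n : ℝ) - 1) * t)]
  unfold Ff
  rw [← Real.abs_sin_eq_sqrt_one_sub_cos_sq, ← Real.abs_sin_eq_sqrt_one_sub_cos_sq]
  generalize ((n : ℝ) - 1) * t = A
  generalize s + ((n : ℝ) - 2) * t = B
  have h3 : -(Real.sin A * Real.sin B) ≤ |Real.sin A| * |Real.sin B| := by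
    rw [← abs_mul]; exact neg_le_abs _
  have h4 := mul_le_mul_of_nonneg_left h3 (sub_nonneg.2 hn1)
  nlinarith [h4]
end

section
/- Let n ≥ 3 be an integer and λ a real number with λ ≥ (10n − 2)/(n+1)². Then for all (u,v) ∈ [−1,1] × [−1,1], F_{n,λ}(u,v) ≤ 4λn² − 12n + 4, and equality holds if and only if (u,v) = (1,−1) or (u,v) = (−1,1). -/
theorem F_bound_large_lambda
    (n : ℕ) (hn : 3 ≤ n) (lam : ℝ)
    (hlam : (10 * (n : ℝ) - 2) / ((n : ℝ) + 1) ^ 2 ≤ lam) :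
    ∀ u v : ℝ, u ∈ Set.Icc (-1 : ℝ) 1 → v ∈ Set.Icc (-1 : ℝ) 1 →
      Ff n lam u v ≤ 4 * lam * (n : ℝ) ^ 2 - 12 * n + 4 ∧
      (Ff n lam u v = 4 * lam * (n : ℝ) ^ 2 - 12 * n + 4 ↔
        (u = 1 ∧ v = -1) ∨ (u = -1 ∧ v = 1)) := by
  intro u v hu hv
  have hn3 : (3 : ℝ) ≤ n := by exact_mod_cast hn
  obtain ⟨hu1, hu2⟩ := hu
  obtain ⟨hv1, hv2⟩ := hv
  have hu0 : 0 ≤ 1 - u ^ 2 := by nlinarith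
  have hv0 : 0 ≤ 1 - v ^ 2 := by nlinarith
  unfold Ff
  have hs := Real.sq_sqrt hu0
  have ht := Real.sq_sqrt hv0
  set s := Real.sqrt (1 - u ^ 2) with hsd
  set t := Real.sqrt (1 - v ^ 2) with htd
  generalize (n : ℝ) = m at *
  have h1 : 10 * m - 2 ≤ lam * (m + 1) ^ 2 := by
    rwa [div_le_iff₀ (by positivity)] at hlam
  have h2 : 0 ≤ lam * (m + 1) - 7 := by
    by_contra h
    push Not at h
    nlinarith
  have h3 : 0 ≤ lam := by
    by_contra h
    push Not at h
    nlinarith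
  have huv : 0 ≤ 1 + u * v := by nlinarith [sq_nonneg (u + v)]
  have hb : 0 < m - 1 := by linarith
  have p1 : 0 ≤ (lam * (m + 1) ^ 2 - (10 * m - 2)) * (1 - u ^ 2) :=
    mul_nonneg (by linarith) hu0
  have p2 : 0 ≤ lam * (m - 1) ^ 2 * (1 - v ^ 2) := by positivity
  have p3 : 0 ≤ (m - 1) * ((lam * (m + 1) - 7) * (1 + u * v)) := by positivity
  have p4 : 0 ≤ (m - 1) * (s - t) ^ 2 := by positivity
  have p4' : (m - 1) * (s - t) ^ 2
      = (m - 1) * ((1 - u ^ 2) + (1 - v ^ 2) - 2 * s * t) := by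
    rw [← hs, ← ht]; ring
  have key : (m - 1) * (5 * (1 - u ^ 2) + 3 * (1 - v ^ 2) + 5 * (u + v) ^ 2) ≤
      4 * lam * m ^ 2 - 12 * m + 4 - (((m + 1) ^ 2 * lam - 8 * m) * u ^ 2
    - 2 * (m - 1) * ((m + 1) * lam - 2) * u * v
    + 4 * (m - 1) * s * t + (m - 1) ^ 2 * lam * v ^ 2) := by
    rw [p4'] at p4
    linarith
  have hq : 0 ≤ (m - 1) * (5 * (1 - u ^ 2) + 3 * (1 - v ^ 2) + 5 * (u + v) ^ 2) := by
    positivity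
  refine ⟨by linarith, ?_, ?_⟩
  · intro h
    have h0 : 5 * (1 - u ^ 2) + 3 * (1 - v ^ 2) + 5 * (u + v) ^ 2 ≤ 0 := by
      by_contra h'
      push Not at h'
      have := mul_pos hb h'
      linarith
    have e1 : (u - 1) * (u + 1) = 0 := by nlinarith [sq_nonneg (u + v)]
    have e2 : u + v = 0 := by
      have : (u + v) ^ 2 = 0 := by nlinarith [sq_nonneg (u + v)]
      exact pow_eq_zero_iff (two_ne_zero) |>.1 this
    rcases mul_eq_zero.1 e1 with e | e
    · left; constructor <;> linarith
    · right; constructor <;> linarith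
  · have hst : u ^ 2 = 1 → s = 0 := by
      intro h; rw [hsd, h]; simp
    rintro (⟨rfl, rfl⟩ | ⟨rfl, rfl⟩)
    · rw [hst (by norm_num)]; ring
    · rw [hst (by norm_num)]; ring
end

section
/- Let n ≥ 3 be an integer and λ a real number with (6n − 2)/(n² + n) ≤ λ < (10n − 2)/(n+1)². Then for all (u,v) ∈ [−1,1] × [−1,1], F_{n,λ}(u,v) ≤ 4λn² − 12n + 4, and equality holds if and only if (u,v) = (1,−1) or (u,v) = (−1,1). -/
theorem F_bound_middle_lambda
    (n : ℕ) (hn : 3 ≤ n) (lam : ℝ)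
    (hlam1 : (6 * (n : ℝ) - 2) / ((n : ℝ) ^ 2 + n) ≤ lam)
    (hlam2 : lam < (10 * (n : ℝ) - 2) / ((n : ℝ) + 1) ^ 2) :
    ∀ u v : ℝ, u ∈ Set.Icc (-1 : ℝ) 1 → v ∈ Set.Icc (-1 : ℝ) 1 →
      Ff n lam u v ≤ 4 * lam * (n : ℝ) ^ 2 - 12 * n + 4 ∧
      (Ff n lam u v = 4 * lam * (n : ℝ) ^ 2 - 12 * n + 4 ↔
        (u = 1 ∧ v = -1) ∨ (u = -1 ∧ v = 1)) := by
  intro u v hu hv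
  have hN : (3:ℝ) ≤ (n:ℝ) := by exact_mod_cast hn
  unfold Ff
  generalize (n:ℝ) = N at *
  have h1 : 6 * N - 2 ≤ lam * (N ^ 2 + N) := (div_le_iff₀ (by positivity)).1 hlam1
  have h2 : 2 < N * lam := by
    by_contra h
    push Not at h
    nlinarith
  have hl : 0 < lam := by
    by_contra h
    push Not at h
    nlinarith
  have h3 : 2 < (N + 1) * lam := by linarith
  have hu2 : 0 ≤ 1 - u ^ 2 := by nlinarith [hu.1, hu.2]
  have hv2 : 0 ≤ 1 - v ^ 2 := by nlinarith [hv.1, hv.2]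
  have ha := Real.sq_sqrt hu2
  have hb := Real.sq_sqrt hv2
  generalize Real.sqrt (1 - u ^ 2) = a at *
  generalize Real.sqrt (1 - v ^ 2) = b at *
  have key : 4 * lam * N ^ 2 - 12 * N + 4 - (((N + 1) ^ 2 * lam - 8 * N) * u ^ 2
      - 2 * (N - 1) * ((N + 1) * lam - 2) * u * v + 4 * (N - 1) * a * b
      + (N - 1) ^ 2 * lam * v ^ 2)
      = (N - 1) * ((N + 1) * lam - 2) * (u + v) ^ 2 + 2 * (N - 1) * (a - b) ^ 2
        + 2 * (lam * (N ^ 2 + N) - (6 * N - 2)) * a ^ 2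
        + 2 * (N - 1) * (N * lam - 2) * b ^ 2 := by
    linear_combination (-(2 * N * (N + 1) * lam - 10 * N + 2)) * ha
      - (2 * N * (N - 1) * lam - 2 * (N - 1)) * hb
  have hk : 0 < (N - 1) * ((N + 1) * lam - 2) := mul_pos (by linarith) (by linarith)
  have hq : 0 < 2 * (N - 1) * (N * lam - 2) := mul_pos (by linarith) (by linarith)
  have hm : 0 < 2 * (N - 1) := by linarith
  have t1 := mul_nonneg hk.le (sq_nonneg (u + v))
  have t2 := mul_nonneg hm.le (sq_nonneg (a - b))
  have t3 : 0 ≤ 2 * (lam * (N ^ 2 + N) - (6 * N - 2)) * a ^ 2 :=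
    mul_nonneg (by linarith) (sq_nonneg a)
  have t4 := mul_nonneg hq.le (sq_nonneg b)
  refine ⟨by linarith, ?_, ?_⟩
  · intro h
    have e1 : (u + v) ^ 2 = 0 :=
      (mul_eq_zero.1 (by linarith : (N - 1) * ((N + 1) * lam - 2) * (u + v) ^ 2 = 0)).resolve_left hk.ne'
    have e4 : b ^ 2 = 0 :=
      (mul_eq_zero.1 (by linarith : 2 * (N - 1) * (N * lam - 2) * b ^ 2 = 0)).resolve_left hq.ne'
    have e5 : u + v = 0 := by simpa using e1
    have e6 : (v - 1) * (v + 1) = 0 := by linarith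
    rcases mul_eq_zero.1 e6 with h | h
    · right; constructor <;> linarith
    · left; constructor <;> linarith
  · rintro (⟨rfl, rfl⟩ | ⟨rfl, rfl⟩)
    · have ea : a = 0 := by norm_num at ha; exact ha
      rw [ea]; ring
    · have ea : a = 0 := by norm_num at ha; exact ha
      rw [ea]; ring
end

section
/- Let n ≥ 3 be an integer and λ a real number with 0 < λ ≤ 2n/(n² − n + 1). Then for all (u,v) ∈ [−1,1] × [−1,1], G_{n,λ}(u,v) ≤ 0. -/
/-- The quadratic form `G_{n,λ}(u,v)` from the paper. -/
noncomputable def Gf (n : ℕ) (lam u v : ℝ) : ℝ :=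
  (lam * ((n : ℝ) + 1) ^ 2 - 10 * n + 2) * u ^ 2
    - 2 * ((n : ℝ) - 1) * (lam * ((n : ℝ) + 1) - 2) * u * v
    + ((n : ℝ) - 1) * (lam * ((n : ℝ) - 1) - 2) * v ^ 2

theorem G_nonpos_small_lambda
    (n : ℕ) (hn : 3 ≤ n) (lam : ℝ) (hlam1 : 0 < lam)
    (hlam2 : lam ≤ 2 * (n : ℝ) / ((n : ℝ) ^ 2 - n + 1)) :
    ∀ u v : ℝ, u ∈ Set.Icc (-1 : ℝ) 1 → v ∈ Set.Icc (-1 : ℝ) 1 →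
      Gf n lam u v ≤ 0 := by
  intro u v _ _
  have hn' : (3 : ℝ) ≤ n := by exact_mod_cast hn
  unfold Gf
  generalize (n : ℝ) = x at *
  have hD : 0 < x ^ 2 - x + 1 := by nlinarith
  rw [le_div_iff₀ hD] at hlam2
  have h1 : 0 ≤ (2 * x - lam * (x ^ 2 - x + 1)) * ((x + 1) * u - (x - 1) * v) ^ 2 :=
    mul_nonneg (by linarith) (sq_nonneg _)
  have h2 : 0 ≤ 2 * (x - 1) * ((2 * x - 1) * u + v) ^ 2 :=
    mul_nonneg (by linarith) (sq_nonneg _)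
  refine nonpos_of_mul_nonpos_right (a := x ^ 2 - x + 1) ?_ hD
  linarith
end

section
/- Let n ≥ 3 be an integer and λ a real number with 2n/(n² − n + 1) < λ < (6n − 2)/(n² + n). Let (u,v) ∈ [−1,1] × [−1,1] be a boundary point of the square, i.e., |u| = 1 or |v| = 1. Then F_{n,λ}(u,v) ≤ A_{n,λ}, where A_{n,λ} = 4(n−1)²[λ(n−1) + 1]/(8n − (n+1)²λ) if 2n/(n² − n + 1) < λ ≤ (5n − 1)/(n² + n), and A_{n,λ} = 4λn² − 12n + 4 if (5n − 1)/(n² + n) < λ < (6n − 2)/(n² + n). -/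
theorem aux_G (N L s : ℝ) (hN : 3 ≤ N) (hD : 0 < 8 * N - (N + 1) ^ 2 * L)
    (hs1 : s ≤ 1) :
    (-(8 * N - (N + 1) ^ 2 * L)) * s ^ 2 + 2 * (N - 1) * ((N + 1) * L - 2) * s + (N - 1) ^ 2 * L ≤
      if L ≤ (5 * N - 1) / (N ^ 2 + N) then
        4 * (N - 1) ^ 2 * (L * (N - 1) + 1) / (8 * N - (N + 1) ^ 2 * L)
      else 4 * L * N ^ 2 - 12 * N + 4 := by
  split_ifs with h
  · rw [le_div_iff₀ hD]
    have := sq_nonneg ((8 * N - (N + 1) ^ 2 * L) * s - (N - 1) * ((N + 1) * L - 2))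
    linarith
  · rw [not_le, div_lt_iff₀ (by positivity)] at h
    have h2 : (8 * N - (N + 1) ^ 2 * L) ≤ (N - 1) * ((N + 1) * L - 2) := by linarith
    have h3 : (8 * N - (N + 1) ^ 2 * L) * (1 + s) ≤ (8 * N - (N + 1) ^ 2 * L) * 2 :=
      mul_le_mul_of_nonneg_left (by linarith) hD.le
    have h4 : 0 ≤ (1 - s) * (2 * ((N - 1) * ((N + 1) * L - 2))
        - (8 * N - (N + 1) ^ 2 * L) * (1 + s)) :=
      mul_nonneg (by linarith) (by linarith)
    linarith

theorem F_boundary_bound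
    (n : ℕ) (hn : 3 ≤ n) (lam : ℝ)
    (hlam1 : 2 * (n : ℝ) / ((n : ℝ) ^ 2 - n + 1) < lam)
    (hlam2 : lam < (6 * (n : ℝ) - 2) / ((n : ℝ) ^ 2 + n))
    (u v : ℝ) (hu : u ∈ Set.Icc (-1 : ℝ) 1) (hv : v ∈ Set.Icc (-1 : ℝ) 1)
    (hbd : |u| = 1 ∨ |v| = 1) :
    Ff n lam u v ≤
      if lam ≤ (5 * (n : ℝ) - 1) / ((n : ℝ) ^ 2 + n) then
        4 * ((n : ℝ) - 1) ^ 2 * (lam * ((n : ℝ) - 1) + 1)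
          / (8 * (n : ℝ) - ((n : ℝ) + 1) ^ 2 * lam)
      else
        4 * lam * (n : ℝ) ^ 2 - 12 * n + 4 := by
  unfold Ff
  have hN : (3 : ℝ) ≤ n := by exact_mod_cast hn
  generalize (n : ℝ) = N at *
  rw [div_lt_iff₀ (by nlinarith)] at hlam1
  rw [lt_div_iff₀ (by positivity)] at hlam2
  have hq : 0 < N ^ 2 - N + 1 := by nlinarith
  have hL : 0 < lam := by
    by_contra hc
    nlinarith
  have hc : 0 < (N + 1) * lam - 2 := by
    have h1 : 0 < (N ^ 2 - N + 1) * ((N + 1) * lam - 2) := by nlinarith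
    exact pos_of_mul_pos_right h1 hq.le
  have hD : 0 < 8 * N - (N + 1) ^ 2 * lam := by
    have h1 : 0 < N * (8 * N - (N + 1) ^ 2 * lam) := by nlinarith
    exact pos_of_mul_pos_right h1 (by linarith)
  obtain ⟨hu1, hu2⟩ := hu
  obtain ⟨hv1, hv2⟩ := hv
  have hs : -(u * v) ≤ 1 := by
    nlinarith [mul_nonneg (by linarith : 0 ≤ 1 + u) (by linarith : 0 ≤ 1 - v),
      mul_nonneg (by linarith : 0 ≤ 1 - u) (by linarith : 0 ≤ 1 + v)]
  rcases hbd with h | h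
  · have hu : u ^ 2 = 1 := by rw [← sq_abs, h]; norm_num
    refine le_trans ?_ (aux_G N lam 1 hN hD le_rfl)
    have h0 : √(1 - u ^ 2) = 0 := by rw [hu]; simp
    rw [h0, hu]
    have hv : v ^ 2 ≤ 1 := by nlinarith
    have h1 : 0 ≤ (N - 1) * ((N + 1) * lam - 2) * (1 + u * v) :=
      mul_nonneg (mul_nonneg (by linarith) hc.le) (by linarith)
    have h2 : 0 ≤ (N - 1) ^ 2 * lam * (1 - v ^ 2) :=
      mul_nonneg (by positivity) (by linarith)
    linarith
  · have hv : v ^ 2 = 1 := by rw [← sq_abs, h]; norm_num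
    refine le_trans ?_ (aux_G N lam (-(u * v)) hN hD hs)
    have h0 : √(1 - v ^ 2) = 0 := by rw [hv]; simp
    have h1 : (-(u * v)) ^ 2 = u ^ 2 := by rw [neg_sq, mul_pow, hv, mul_one]
    rw [h0, hv, h1]
    linarith
end

section
/- Let n ≥ 3 be an integer and λ a real number with 2n/(n² − n + 1) < λ < (6n − 2)/(n² + n). Suppose (u,v) ∈ (−1,1) × (−1,1) with (u,v) ≠ (0,0) is a critical point of F_{n,λ}, i.e., both partial derivatives of F_{n,λ} vanish at (u,v). Then v² = (√(nλ) + √(2−λ))²·[(n−1)λ − √(λn(2−λ))] / ((n−1)²λ²), u·v = [(n+1)λ − 2]·[λ(n−1) − √(λn(2−λ))] / ((n−1)λ·[λ(n−1) − 2√(λn(2−λ))]), and u² = [λ(n−1) − 2√(λn(2−λ)) + 2]·[(n−1)λ − √(λn(2−λ))] / [λ(n−1) − 2√(λn(2−λ))]². -/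
lemma hasDerivAt_sq_aux (x : ℝ) (hx : 0 < 1 - x ^ 2) :
    HasDerivAt (fun y : ℝ => Real.sqrt (1 - y ^ 2)) (-x / Real.sqrt (1 - x ^ 2)) x := by
  have h : HasDerivAt (fun y : ℝ => 1 - y ^ 2) (-(2 * x)) x := by
    simpa using (hasDerivAt_pow 2 x).const_sub 1
  convert h.sqrt hx.ne' using 1
  have : Real.sqrt (1 - x ^ 2) ≠ 0 := (Real.sqrt_pos.2 hx).ne'
  field_simp

theorem F_nonzero_critical_points
    (n : ℕ) (hn : 3 ≤ n) (lam : ℝ)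
    (hlam1 : 2 * (n : ℝ) / ((n : ℝ) ^ 2 - n + 1) < lam)
    (hlam2 : lam < (6 * (n : ℝ) - 2) / ((n : ℝ) ^ 2 + n))
    (u v : ℝ) (hu : u ∈ Set.Ioo (-1 : ℝ) 1) (hv : v ∈ Set.Ioo (-1 : ℝ) 1)
    (hne : (u, v) ≠ (0, 0))
    (hcu : deriv (fun x : ℝ => Ff n lam x v) u = 0)
    (hcv : deriv (fun y : ℝ => Ff n lam u y) v = 0) :
    v ^ 2 = (Real.sqrt ((n : ℝ) * lam) + Real.sqrt (2 - lam)) ^ 2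
        * (((n : ℝ) - 1) * lam - Real.sqrt (lam * n * (2 - lam)))
        / (((n : ℝ) - 1) ^ 2 * lam ^ 2) ∧
    u * v = (((n : ℝ) + 1) * lam - 2) * (lam * ((n : ℝ) - 1) - Real.sqrt (lam * n * (2 - lam)))
        / (((n : ℝ) - 1) * lam * (lam * ((n : ℝ) - 1) - 2 * Real.sqrt (lam * n * (2 - lam)))) ∧
    u ^ 2 = (lam * ((n : ℝ) - 1) - 2 * Real.sqrt (lam * n * (2 - lam)) + 2)
        * (((n : ℝ) - 1) * lam - Real.sqrt (lam * n * (2 - lam)))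
        / (lam * ((n : ℝ) - 1) - 2 * Real.sqrt (lam * n * (2 - lam))) ^ 2 := by
  have hn' : (3 : ℝ) ≤ n := by exact_mod_cast hn
  have hu1 : 0 < 1 - u ^ 2 := by nlinarith [hu.1, hu.2]
  have hv1 : 0 < 1 - v ^ 2 := by nlinarith [hv.1, hv.2]
  have hdu := hasDerivAt_sq_aux u hu1
  have hdv := hasDerivAt_sq_aux v hv1
  have ha := Real.sqrt_pos.2 hu1
  have hb := Real.sqrt_pos.2 hv1
  have ha2 := Real.sq_sqrt hu1.le
  have hb2 := Real.sq_sqrt hv1.le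
  have h1 : HasDerivAt (fun x : ℝ => Ff n lam x v)
      ((((n : ℝ) + 1) ^ 2 * lam - 8 * n) * (2 * u)
        - 2 * ((n : ℝ) - 1) * (((n : ℝ) + 1) * lam - 2) * v
        + 4 * ((n : ℝ) - 1) * (-u / Real.sqrt (1 - u ^ 2)) * Real.sqrt (1 - v ^ 2)) u := by
    have e1 : HasDerivAt (fun x : ℝ => x ^ 2) (2 * u) u := by simpa using hasDerivAt_pow 2 u
    have := ((((e1.const_mul (((n : ℝ) + 1) ^ 2 * lam - 8 * n)).sub
      (((hasDerivAt_id' u).const_mul (2 * ((n : ℝ) - 1) * (((n : ℝ) + 1) * lam - 2))).mul_const v)).add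
      ((hdu.const_mul (4 * ((n : ℝ) - 1))).mul_const (Real.sqrt (1 - v ^ 2)))).add_const
      (((n : ℝ) - 1) ^ 2 * lam * v ^ 2))
    refine (this.congr_deriv (by ring)).congr_of_eventuallyEq (Filter.Eventually.of_forall fun x => ?_)
    simp [Ff]
  have h2 : HasDerivAt (fun y : ℝ => Ff n lam u y)
      (- (2 * ((n : ℝ) - 1) * (((n : ℝ) + 1) * lam - 2) * u)
        + 4 * ((n : ℝ) - 1) * Real.sqrt (1 - u ^ 2) * (-v / Real.sqrt (1 - v ^ 2))
        + ((n : ℝ) - 1) ^ 2 * lam * (2 * v)) v := by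
    have e1 : HasDerivAt (fun x : ℝ => x ^ 2) (2 * v) v := by simpa using hasDerivAt_pow 2 v
    have := (((((hasDerivAt_id' v).const_mul (2 * ((n : ℝ) - 1) * (((n : ℝ) + 1) * lam - 2) * u)).const_sub
      ((((n : ℝ) + 1) ^ 2 * lam - 8 * n) * u ^ 2)).add
      (hdv.const_mul (4 * ((n : ℝ) - 1) * Real.sqrt (1 - u ^ 2)))).add
      (e1.const_mul (((n : ℝ) - 1) ^ 2 * lam)))
    refine (this.congr_deriv (by ring)).congr_of_eventuallyEq (Filter.Eventually.of_forall fun x => ?_)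
    simp [Ff]
  rw [h1.deriv] at hcu
  rw [h2.deriv] at hcv
  clear h1 h2 hdu hdv
  set a := Real.sqrt (1 - u ^ 2)
  set b := Real.sqrt (1 - v ^ 2)
  generalize hN : (n : ℝ) = N at *
  have hq : 0 < N ^ 2 - N + 1 := by nlinarith
  have hq2 : 0 < N ^ 2 + N := by nlinarith
  rw [div_lt_iff₀ hq] at hlam1
  rw [lt_div_iff₀ hq2] at hlam2
  have hl0 : 0 < lam := by
    by_contra h
    push Not at h
    nlinarith
  have hl2 : lam < 2 := by
    by_contra h
    push Not at h
    nlinarith [mul_le_mul_of_nonneg_right h hq2.le]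
  have hm : 0 < N - 1 := by linarith
  have hB : 0 < (N + 1) * lam - 2 := by
    by_contra h
    push Not at h
    nlinarith [mul_le_mul_of_nonneg_left h (by linarith : 0 ≤ N), mul_pos hl0 hm]
  have hsp : 0 < lam * N * (2 - lam) := by
    have : 0 < N := by linarith
    have : 0 < 2 - lam := by linarith
    positivity
  have hs := Real.sqrt_pos.2 hsp
  have hs2 := Real.sq_sqrt hsp.le
  have hss : (Real.sqrt (N * lam) + Real.sqrt (2 - lam)) ^ 2
      = (N - 1) * lam + 2 + 2 * Real.sqrt (lam * N * (2 - lam)) := by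
    have p1 : 0 ≤ N * lam := by nlinarith
    have e : Real.sqrt (lam * N * (2 - lam)) = Real.sqrt (N * lam) * Real.sqrt (2 - lam) := by
      rw [← Real.sqrt_mul p1, mul_comm lam N]
    rw [e, add_sq, Real.sq_sqrt p1, Real.sq_sqrt (by linarith)]
    ring
  rw [hss, mul_comm lam (N - 1)]
  set s := Real.sqrt (lam * N * (2 - lam))
  have c1 : (((N + 1) ^ 2 * lam - 8 * N) * a - 2 * (N - 1) * b) * u
      = (N - 1) * ((N + 1) * lam - 2) * v * a := by
    field_simp at hcu
    linarith
  have c2 : ((N + 1) * lam - 2) * u * b = ((N - 1) * lam * b - 2 * a) * v := by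
    have : 2 * (N - 1) * (((N + 1) * lam - 2) * u * b - ((N - 1) * lam * b - 2 * a) * v) = 0 := by
      field_simp at hcv
      linear_combination (-1) * hcv
    rcases mul_eq_zero.1 this with h | h
    · linarith
    · linarith
  have hv0 : v ≠ 0 := by
    intro h
    apply hne
    rw [h, mul_zero] at c2
    have : u = 0 := by
      rcases mul_eq_zero.1 c2 with h | h
      · rcases mul_eq_zero.1 h with h | h
        · exact absurd h hB.ne'
        · exact h
      · exact absurd h hb.ne'
    rw [this, h]
  have key : ((N + 1) ^ 2 * lam - 8 * N) * a ^ 2 + 2 * (N - 1) ^ 2 * lam * a * b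
      + (N - 1) ^ 2 * lam * b ^ 2 = 0 := by
    have : v * (((N + 1) ^ 2 * lam - 8 * N) * a ^ 2 + 2 * (N - 1) ^ 2 * lam * a * b
      + (N - 1) ^ 2 * lam * b ^ 2) = 0 := by
      linear_combination (-1/2) * ((N + 1) * lam - 2) * b * c1
        + (1/2) * (((N + 1) ^ 2 * lam - 8 * N) * a - 2 * (N - 1) * b) * c2
    exact (mul_eq_zero.1 this).resolve_left hv0
  have hD : 0 < (N - 1) * lam := mul_pos hm hl0
  have hE : ((N - 1) * lam - 2 * s) * a = - ((N - 1) * lam) * b := by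
    have : ((N - 1) * lam * (a + b) - 2 * s * a) * ((N - 1) * lam * (a + b) + 2 * s * a) = 0 := by
      linear_combination lam * key - 4 * a ^ 2 * hs2
    have h := (mul_eq_zero.1 this).resolve_right (by positivity)
    linarith
  have hBsq : ((N + 1) * lam - 2) ^ 2
      = ((N - 1) * lam - 2 * s + 2) * ((N - 1) * lam + 2 + 2 * s) := by
    linear_combination 4 * hs2
  have hDB : (N + 1) * lam - 2 = (N - 1) * lam + 2 * lam - 2 := by ring
  clear_value a b s
  clear hcu hcv c1 key hss hsp
  generalize (N + 1) * lam - 2 = B at *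
  generalize hDdef : (N - 1) * lam = D at *
  have hD2 : (N - 1) ^ 2 * lam ^ 2 = D ^ 2 := by rw [← hDdef]; ring
  rw [hD2]
  generalize hEd : D - 2 * s = E at *
  generalize hWd : D + 2 + 2 * s = W at *
  have hE0 : E ≠ 0 := by
    intro h
    rw [h, zero_mul] at hE
    nlinarith [mul_pos hD hb]
  have hE2 : E + 2 ≠ 0 := by
    intro h
    rw [h, zero_mul] at hBsq
    exact hB.ne' (pow_eq_zero_iff (two_ne_zero) |>.1 hBsq)
  have hk : B * E * u = D * (E + 2) * v := by
    have : b * (B * E * u - D * (E + 2) * v) = 0 := by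
      linear_combination E * c2 - 2 * v * hE
    linarith [(mul_eq_zero.1 this).resolve_left hb.ne']
  have hsq : E ^ 2 * (1 - u ^ 2) = D ^ 2 * (1 - v ^ 2) := by
    rw [← ha2, ← hb2]
    linear_combination (E * a - D * b) * hE
  have hv2 : v ^ 2 * D ^ 2 = W * (D - s) := by
    have : (E + 2) * (4 * s) * (v ^ 2 * D ^ 2 - W * (D - s)) = 0 := by
      have e1 : v ^ 2 * D ^ 2 * (B ^ 2 - (E + 2) ^ 2) = B ^ 2 * (D ^ 2 - E ^ 2) := by
        linear_combination B ^ 2 * hsq + (B * E * u + D * (E + 2) * v) * hk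
      rw [hBsq] at e1
      subst hEd hWd
      linear_combination e1
    have := (mul_eq_zero.1 this).resolve_left (mul_ne_zero hE2 (by positivity))
    linarith
  have hB0 := hB.ne'
  have hD0 := hD.ne'
  refine ⟨?_, ?_, ?_⟩
  · rw [eq_div_iff (by positivity)]
    exact hv2
  · rw [eq_div_iff (mul_ne_zero hD0 hE0)]
    apply mul_left_cancel₀ hB0
    linear_combination (v * D) * hk + (E + 2) * hv2 - (D - s) * hBsq
  · rw [eq_div_iff (pow_ne_zero 2 hE0)]
    apply mul_left_cancel₀ (pow_ne_zero 2 hB0)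
    linear_combination (B * E * u + D * (E + 2) * v) * hk + (E + 2) ^ 2 * hv2 - (E + 2) * (D - s) * hBsq
end

section
/- Let n ≥ 3 be an integer and λ a real number with (3n + √(5n² − 4n))/(n² + n) ≤ λ < (6n − 2)/(n² + n). If (u,v) ∈ (−1,1) × (−1,1) is a critical point of F_{n,λ} (both partial derivatives vanish at (u,v)), then (u,v) = (0,0); moreover F_{n,λ}(0,0) = 4(n−1). -/
theorem Ff_aux (m lam u v s t : ℝ) (n : ℝ) (hm : n = m + 1) (hn : 3 ≤ n)
    (hw : 4 < (n + 1) * lam)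
    (hq : 0 ≤ n * ((n + 1) * lam) ^ 2 - 6 * n * ((n + 1) * lam) + 4 * n + 4)
    (hE : 0 ≤ n * ((n + 1) * lam) - 5 * n + 1)
    (hs : 0 < s) (ht : 0 < t) (hs2 : s ^ 2 = 1 - u ^ 2) (ht2 : t ^ 2 = 1 - v ^ 2)
    (h1 : ((n + 1) ^ 2 * lam - 8 * n) * u * s = m * ((n + 1) * lam - 2) * v * s + 2 * m * u * t)
    (h2 : m ^ 2 * lam * v * t = m * ((n + 1) * lam - 2) * u * t + 2 * m * v * s) :
    u = 0 ∧ v = 0 := by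
  have hm0 : 0 < m := by linarith
  have hlam : 0 < lam := by
    by_contra h
    nlinarith
  have hB : 0 < m * ((n + 1) * lam - 2) := mul_pos hm0 (by linarith)
  obtain ⟨r, hr⟩ : ∃ r, r = t / s := ⟨_, rfl⟩
  have htr : t = r * s := by rw [hr]; field_simp
  have hr0 : 0 < r := by rw [hr]; positivity
  have h1' : ((n + 1) ^ 2 * lam - 8 * n) * u = m * ((n + 1) * lam - 2) * v + 2 * m * u * r := by
    apply mul_right_cancel₀ hs.ne'
    rw [h1, htr]; ring
  have h2' : m ^ 2 * lam * v * r = m * ((n + 1) * lam - 2) * u * r + 2 * m * v := by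
    apply mul_right_cancel₀ hs.ne'
    rw [htr] at h2; linear_combination h2
  by_cases hu : u = 0
  · refine ⟨hu, ?_⟩
    rw [hu] at h1'
    have : m * ((n + 1) * lam - 2) * v = 0 := by linarith
    exact (mul_eq_zero.mp this).resolve_left hB.ne'
  by_cases hv : v = 0
  · rw [hv] at h2'
    have : (m * ((n + 1) * lam - 2) * r) * u = 0 := by linarith
    exact absurd ((mul_eq_zero.mp this).resolve_left (mul_pos hB hr0).ne') hu
  exfalso
  have hkey : m ^ 2 * lam * (r ^ 2 + 2 * r) = 8 * n - (n + 1) ^ 2 * lam := by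
    have h3 : (u * v) * ((((n + 1) ^ 2 * lam - 8 * n) - 2 * m * r) * (m ^ 2 * lam * r - 2 * m)
        - (m * ((n + 1) * lam - 2)) ^ 2 * r) = 0 := by
      linear_combination (m ^ 2 * lam * r - 2 * m) * v * h1' + m * ((n + 1) * lam - 2) * v * h2'
    have h4 := (mul_eq_zero.mp h3).resolve_left (mul_ne_zero hu hv)
    apply mul_left_cancel₀ (mul_pos two_pos hm0).ne'
    subst hm
    linear_combination -h4
  have hrE : m * r ≤ n * ((n + 1) * lam) - 5 * n + 1 := by
    by_contra hlt
    push Not at hlt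
    obtain ⟨E, hEd⟩ : ∃ E, E = n * ((n + 1) * lam) - 5 * n + 1 := ⟨_, rfl⟩
    rw [← hEd] at hlt hE
    have h5 : E * (E + 2 * m) < (m * r) * (m * r + 2 * m) := by nlinarith only [hlt, hE, hm0]
    have h6 := mul_lt_mul_of_pos_left h5 hlam
    have h7 : 0 ≤ ((n + 1) * lam - 2) * (n * ((n + 1) * lam) ^ 2 - 6 * n * ((n + 1) * lam) + 4 * n + 4) :=
      mul_nonneg (by linarith) hq
    have h8 : lam * (m * r * (m * r + 2 * m)) = 8 * n - (n + 1) ^ 2 * lam := by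
      linear_combination hkey
    have h9 : 0 ≤ (n + 1) * (lam * (E * (E + 2 * m)) - (8 * n - (n + 1) ^ 2 * lam)) := by
      have h10 : (n + 1) * (lam * (E * (E + 2 * m)) - (8 * n - (n + 1) ^ 2 * lam)) = n * (((n + 1) * lam - 2) * (n * ((n + 1) * lam) ^ 2 - 6 * n * ((n + 1) * lam) + 4 * n + 4)) := by
        subst hEd; subst hm; ring
      rw [h10]
      have : 0 ≤ n := by linarith
      have := mul_nonneg this h7
      linarith
    rw [h8] at h6
    exact absurd h9 (not_le.mpr (mul_neg_of_pos_of_neg (by linarith) (by linarith)))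
  have hr1 : r < 1 := by
    by_contra hge
    push Not at hge
    have h5 : m ^ 2 * lam * 3 ≤ m ^ 2 * lam * (r ^ 2 + 2 * r) :=
      mul_le_mul_of_nonneg_left (by nlinarith only [hge]) (by positivity)
    have h6 : 4 * (n ^ 2 - n + 1) < (n ^ 2 - n + 1) * ((n + 1) * lam) := by
      have h60 : 0 < n ^ 2 - n + 1 := by nlinarith only [hn]
      linarith only [mul_lt_mul_of_pos_left hw h60]
    have h7 : (n + 1) * ((n ^ 2 - n + 1) * lam) ≤ (n + 1) * (2 * n) := by
      apply mul_le_mul_of_nonneg_left _ (by linarith)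
      subst hm; linarith only [h5, hkey]
    nlinarith only [h6, h7, hn]
  have hA : 0 < 8 * n - (n + 1) ^ 2 * lam := by rw [← hkey]; positivity
  have hk : 8 * n - (n + 1) ^ 2 * lam + 2 * m * r ≤ m * ((n + 1) * lam - 2) := by
    subst hm; linarith
  have hvu : m * ((n + 1) * lam - 2) * v = -(8 * n - (n + 1) ^ 2 * lam + 2 * m * r) * u := by
    linarith
  have hpos : 0 < 8 * n - (n + 1) ^ 2 * lam + 2 * m * r := by positivity
  generalize 8 * n - (n + 1) ^ 2 * lam + 2 * m * r = P at hk hvu hpos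
  generalize m * ((n + 1) * lam - 2) = B at hk hvu hB
  have hle : v ^ 2 ≤ u ^ 2 := by
    have h5 : B ^ 2 * v ^ 2 = P ^ 2 * u ^ 2 := by
      linear_combination (B * v - P * u) * hvu
    have h6 : P ^ 2 * u ^ 2 ≤ B ^ 2 * u ^ 2 := by gcongr
    exact le_of_mul_le_mul_left (by linarith) (pow_pos hB 2)
  have hts : t < s := by rw [htr]; nlinarith only [hr1, hs]
  nlinarith only [hts, hs, ht, hs2, ht2, hle]

theorem F_only_critical_point_is_origin
    (n : ℕ) (hn : 3 ≤ n) (lam : ℝ)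
    (hlam1 : (3 * (n : ℝ) + Real.sqrt (5 * (n : ℝ) ^ 2 - 4 * n)) / ((n : ℝ) ^ 2 + n) ≤ lam)
    (hlam2 : lam < (6 * (n : ℝ) - 2) / ((n : ℝ) ^ 2 + n)) :
    (∀ u v : ℝ, u ∈ Set.Ioo (-1 : ℝ) 1 → v ∈ Set.Ioo (-1 : ℝ) 1 →
      deriv (fun x : ℝ => Ff n lam x v) u = 0 →
      deriv (fun y : ℝ => Ff n lam u y) v = 0 →
      (u, v) = (0, 0)) ∧
    Ff n lam 0 0 = 4 * ((n : ℝ) - 1) := by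
  have hN : (3 : ℝ) ≤ n := by exact_mod_cast hn
  refine ⟨?_, by simp [Ff]⟩
  intro u v hu hv hdu hdv
  obtain ⟨q, hq⟩ : ∃ q, q = Real.sqrt (5 * (n : ℝ) ^ 2 - 4 * n) := ⟨_, rfl⟩
  have hq2 : q ^ 2 = 5 * (n : ℝ) ^ 2 - 4 * n := by
    rw [hq]; exact Real.sq_sqrt (by nlinarith)
  have hq0 : 0 ≤ q := by rw [hq]; positivity
  rw [← hq, div_le_iff₀ (by positivity)] at hlam1
  have hq1 : 2 * (n : ℝ) - 1 ≤ q := by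
    apply le_of_sq_le_sq _ hq0
    nlinarith
  have hu2 : 0 < 1 - u ^ 2 := by nlinarith [hu.1, hu.2]
  have hv2 : 0 < 1 - v ^ 2 := by nlinarith [hv.1, hv.2]
  have hs := Real.sqrt_pos.mpr hu2
  have ht := Real.sqrt_pos.mpr hv2
  have hW : 3 * (n : ℝ) + q ≤ n * ((n + 1) * lam) := by linarith
  have hd : ∀ (a b c e x : ℝ), 0 < 1 - x ^ 2 → HasDerivAt
      (fun x : ℝ => a * x ^ 2 + b * x + c * Real.sqrt (1 - x ^ 2) + e)
      (2 * a * x + b - c * x / Real.sqrt (1 - x ^ 2)) x := by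
    intro a b c e x hx
    have h1 : HasDerivAt (fun x : ℝ => 1 - x ^ 2) (-(2 * x)) x := by
      simpa using (hasDerivAt_pow 2 x).const_sub 1
    have h2 := h1.sqrt hx.ne'
    have h3 := ((((hasDerivAt_pow 2 x).const_mul a).add ((hasDerivAt_id x).const_mul b)).add
      (h2.const_mul c)).add_const e
    refine HasDerivAt.congr_deriv (f := fun x : ℝ => a * x ^ 2 + b * x + c * Real.sqrt (1 - x ^ 2) + e) h3 ?_
    have := (Real.sqrt_pos.mpr hx).ne'
    simp
    field_simp
    ring
  have e1 : (fun x : ℝ => Ff n lam x v) = fun x : ℝ =>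
      (((n : ℝ) + 1) ^ 2 * lam - 8 * n) * x ^ 2
      + (- 2 * ((n : ℝ) - 1) * (((n : ℝ) + 1) * lam - 2) * v) * x
      + (4 * ((n : ℝ) - 1) * Real.sqrt (1 - v ^ 2)) * Real.sqrt (1 - x ^ 2)
      + ((n : ℝ) - 1) ^ 2 * lam * v ^ 2 := by
    funext x; simp only [Ff]; ring
  have e2 : (fun y : ℝ => Ff n lam u y) = fun x : ℝ =>
      (((n : ℝ) - 1) ^ 2 * lam) * x ^ 2
      + (- 2 * ((n : ℝ) - 1) * (((n : ℝ) + 1) * lam - 2) * u) * x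
      + (4 * ((n : ℝ) - 1) * Real.sqrt (1 - u ^ 2)) * Real.sqrt (1 - x ^ 2)
      + (((n : ℝ) + 1) ^ 2 * lam - 8 * n) * u ^ 2 := by
    funext x; simp only [Ff]; ring
  rw [e1, (hd _ _ _ _ u hu2).deriv] at hdu
  rw [e2, (hd _ _ _ _ v hv2).deriv] at hdv
  have hw : 4 < ((n : ℝ) + 1) * lam := by
    by_contra h
    push Not at h
    nlinarith
  have key := Ff_aux ((n : ℝ) - 1) lam u v _ _ n (by ring) hN hw ?_ (by linarith) hs ht
    (Real.sq_sqrt hu2.le) (Real.sq_sqrt hv2.le) ?_ ?_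
  · rw [key.1, key.2]
  · have : q ^ 2 ≤ (n * (((n : ℝ) + 1) * lam) - 3 * n) ^ 2 := by
      apply pow_le_pow_left₀ hq0; linarith
    have h9 : 0 ≤ (n : ℝ) * (n * (((n : ℝ) + 1) * lam) ^ 2 - 6 * n * (((n : ℝ) + 1) * lam) + 4 * n + 4) := by
      nlinarith
    exact nonneg_of_mul_nonneg_right h9 (by linarith)
  · field_simp at hdu
    linear_combination hdu / 2
  · field_simp at hdv
    linear_combination hdv / 2
end

section
/- Let n ≥ 3 be an integer and λ a real number with (3n + √(5n² − 4n))/(n² + n) ≤ λ < (6n − 2)/(n² + n). Then for all (u,v) ∈ [−1,1] × [−1,1], F_{n,λ}(u,v) ≤ 4λn² − 12n + 4. -/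
theorem F_max_large_lambda
    (n : ℕ) (hn : 3 ≤ n) (lam : ℝ)
    (hlam1 : (3 * (n : ℝ) + Real.sqrt (5 * (n : ℝ) ^ 2 - 4 * n)) / ((n : ℝ) ^ 2 + n) ≤ lam)
    (hlam2 : lam < (6 * (n : ℝ) - 2) / ((n : ℝ) ^ 2 + n)) :
    ∀ u v : ℝ, u ∈ Set.Icc (-1 : ℝ) 1 → v ∈ Set.Icc (-1 : ℝ) 1 →
      Ff n lam u v ≤ 4 * lam * (n : ℝ) ^ 2 - 12 * n + 4 := by
  intro u v hu hv
  have hN : (3 : ℝ) ≤ n := by exact_mod_cast hn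
  unfold Ff
  generalize (n : ℝ) = N at *
  rw [div_le_iff₀ (by positivity)] at hlam1
  have hw0 : 0 ≤ 5 * N ^ 2 - 4 * N := by nlinarith
  have hw2 := Real.sq_sqrt hw0
  have hwn := Real.sqrt_nonneg (5 * N ^ 2 - 4 * N)
  have hw : 2 * N - 1 < Real.sqrt (5 * N ^ 2 - 4 * N) :=
    Real.lt_sqrt_of_sq_lt (by nlinarith)
  have hs := Real.sq_sqrt (show 0 ≤ 1 - u ^ 2 by nlinarith [hu.1, hu.2])
  have ht := Real.sq_sqrt (show 0 ≤ 1 - v ^ 2 by nlinarith [hv.1, hv.2])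
  generalize Real.sqrt (5 * N ^ 2 - 4 * N) = w at *
  generalize Real.sqrt (1 - u ^ 2) = s at *
  generalize Real.sqrt (1 - v ^ 2) = t at *
  obtain ⟨μ, hμ⟩ : ∃ μ, μ = N * lam := ⟨_, rfl⟩
  have h1 : 3 * N + w ≤ (N + 1) * μ := by rw [hμ]; linarith
  have hP : 0 < (N + 1) * μ - 5 * N + 1 := by linarith
  have hsq : 0 ≤ (N + 1) * ((N + 1) * μ ^ 2 - 6 * N * μ + 4 * N) := by
    nlinarith [mul_nonneg (show 0 ≤ (N + 1) * μ - 3 * N - w by linarith)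
      (show 0 ≤ (N + 1) * μ - 3 * N + w by linarith)]
  have hq : 0 ≤ (N + 1) * μ ^ 2 - 6 * N * μ + 4 * N :=
    nonneg_of_mul_nonneg_right hsq (by linarith)
  have hquad : 0 ≤ ((N + 1) * μ - 5 * N + 1) * s ^ 2 + (N - 1) * (μ - 1) * t ^ 2
      - 2 * (N - 1) * s * t := by
    refine nonneg_of_mul_nonneg_right (b := _) (a := (N + 1) * μ - 5 * N + 1) ?_ hP
    have e : ((N + 1) * μ - 5 * N + 1) * (((N + 1) * μ - 5 * N + 1) * s ^ 2
        + (N - 1) * (μ - 1) * t ^ 2 - 2 * (N - 1) * s * t)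
        = (((N + 1) * μ - 5 * N + 1) * s - (N - 1) * t) ^ 2
          + (N - 1) * ((N + 1) * μ ^ 2 - 6 * N * μ + 4 * N) * t ^ 2 := by ring
    rw [e]
    have : 0 ≤ N - 1 := by linarith
    positivity
  have hB : 0 ≤ (N + 1) * lam - 2 := by
    refine nonneg_of_mul_nonneg_right (a := N) ?_ (by linarith)
    have : N * ((N + 1) * lam - 2) = (N + 1) * μ - 2 * N := by rw [hμ]; ring
    linarith
  have hB2 := mul_nonneg (mul_nonneg (show 0 ≤ N - 1 by linarith) hB) (sq_nonneg (u + v))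
  have hu2 : u ^ 2 = 1 - s ^ 2 := by linarith
  have hv2 : v ^ 2 = 1 - t ^ 2 := by linarith
  have huv : (u + v) ^ 2 = 2 - s ^ 2 - t ^ 2 + 2 * (u * v) := by
    linear_combination hu2 + hv2
  rw [huv] at hB2
  rw [hu2, hv2]
  subst hμ
  linarith
end

section
/- Let n ≥ 3 be an integer and λ a real number with 2n/(n² − n + 1) < λ < (3n + √(5n² − 4n))/(n² + n). Then for all (u,v) ∈ [−1,1] × [−1,1], F_{n,λ}(u,v) ≤ (4λ(n−1)[λ(n² + 1) − 4n] + 16n(2 − λ)√(nλ(2 − λ))) / (λ[8n − λ(n+1)²]). -/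
theorem F_max_middle_lambda
    (n : ℕ) (hn : 3 ≤ n) (lam : ℝ)
    (hlam1 : 2 * (n : ℝ) / ((n : ℝ) ^ 2 - n + 1) < lam)
    (hlam2 : lam < (3 * (n : ℝ) + Real.sqrt (5 * (n : ℝ) ^ 2 - 4 * n)) / ((n : ℝ) ^ 2 + n)) :
    ∀ u v : ℝ, u ∈ Set.Icc (-1 : ℝ) 1 → v ∈ Set.Icc (-1 : ℝ) 1 →
      Ff n lam u v ≤
        (4 * lam * ((n : ℝ) - 1) * (lam * ((n : ℝ) ^ 2 + 1) - 4 * n)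
            + 16 * (n : ℝ) * (2 - lam) * Real.sqrt ((n : ℝ) * lam * (2 - lam)))
          / (lam * (8 * (n : ℝ) - lam * ((n : ℝ) + 1) ^ 2)) := by
  intro u v hu hv
  have hN : (3 : ℝ) ≤ n := by exact_mod_cast hn
  unfold Ff
  generalize (n : ℝ) = N at *
  have hlam0 : 0 < lam := lt_trans (div_pos (by linarith) (by nlinarith)) hlam1
  have hP : 0 < 8 * N - lam * (N + 1) ^ 2 := by
    have hsq : Real.sqrt (5 * N ^ 2 - 4 * N) < (5 * N ^ 2 - 3 * N) / (N + 1) := by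
      rw [Real.sqrt_lt' (div_pos (by nlinarith) (by linarith)), div_pow, lt_div_iff₀ (by positivity)]
      obtain ⟨k, rfl⟩ : ∃ k, N = k + 3 := ⟨N - 3, by ring⟩
      have hk : 0 ≤ k := by linarith
      have : 0 < 4 * (k + 3) * (5 * (k+3)^3 - 9 * (k+3)^2 + 3 * (k+3) + 1) := by
        have : 0 < 5 * (k+3)^3 - 9 * (k+3)^2 + 3 * (k+3) + 1 := by
          ring_nf; positivity
        positivity
      linarith
    rw [lt_div_iff₀ (by linarith)] at hsq
    rw [lt_div_iff₀ (by positivity)] at hlam2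
    have h1 : lam * (N + 1) ^ 2 * N < 8 * N * N := by nlinarith
    have := lt_of_mul_lt_mul_right h1 (by linarith)
    linarith
  have hl2 : lam < 2 := by nlinarith [sq_nonneg (N - 1)]
  set S := Real.sqrt (N * lam * (2 - lam)) with hS
  have hSS : S ^ 2 = N * lam * (2 - lam) :=
    Real.sq_sqrt (mul_nonneg (by positivity) (by linarith))
  have hS0 : 0 ≤ S := Real.sqrt_nonneg _
  have hs : Real.sqrt (1 - u ^ 2) ^ 2 = 1 - u ^ 2 := Real.sq_sqrt (by nlinarith [hu.1, hu.2])
  have ht : Real.sqrt (1 - v ^ 2) ^ 2 = 1 - v ^ 2 := Real.sq_sqrt (by nlinarith [hv.1, hv.2])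
  generalize Real.sqrt (1 - u ^ 2) = s at *
  generalize Real.sqrt (1 - v ^ 2) = t at *
  obtain ⟨P, hPd⟩ : ∃ P, P = 8 * N - lam * (N + 1) ^ 2 := ⟨_, rfl⟩
  obtain ⟨w, hw⟩ : ∃ w, w = 2 * S + lam * (N - 1) := ⟨_, rfl⟩
  obtain ⟨z, hz⟩ : ∃ z, z = 2 * S - lam * (N - 1) := ⟨_, rfl⟩
  obtain ⟨C, hC⟩ : ∃ C, C = (N - 1) * ((N + 1) * lam - 2) := ⟨_, rfl⟩
  rw [← hPd] at hP ⊢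
  have hw0 : 0 < w := by
    have := mul_pos hlam0 (show 0 < N - 1 by linarith)
    linarith
  have hwz : w * z = lam * P := by
    rw [hw, hz, hPd]; linear_combination 4 * hSS
  have hz0 : 0 < z := by
    have : 0 < w * z := by rw [hwz]; positivity
    exact (pos_iff_pos_of_mul_pos this).1 hw0
  obtain ⟨a, ha⟩ : ∃ a, a = 2 * z / lam := ⟨_, rfl⟩
  obtain ⟨b, hb⟩ : ∃ b, b = 2 * (N - 1) ^ 2 * w / P := ⟨_, rfl⟩
  have ha0 : 0 < a := by rw [ha]; positivity
  have hal : a * lam = 2 * z := by rw [ha]; field_simp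
  have hbP : b * P = 2 * (N - 1) ^ 2 * w := by rw [hb]; field_simp
  have hab : a * b = 4 * (N - 1) ^ 2 := by
    have h : lam * P * (a * b) = lam * P * (4 * (N - 1) ^ 2) := by
      linear_combination b * P * hal + 2 * z * hbP + 4 * (N-1)^2 * hwz
    exact mul_left_cancel₀ (by positivity) h
  have hdet : (P + a) * (b - (N - 1) ^ 2 * lam) = C ^ 2 := by
    have : (P + a) * (b - (N - 1) ^ 2 * lam)
      = P * b + a * b - (N-1)^2 * (a * lam) - P * (N-1)^2 * lam := by ring
    rw [this, hab, hal, mul_comm P b, hbP, hw, hz, hC, hPd]; ring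
  have hR : (4 * lam * (N - 1) * (lam * (N ^ 2 + 1) - 4 * N) + 16 * N * (2 - lam) * S)
      / (lam * P) = a + b := by
    rw [div_eq_iff (by positivity)]
    have : (a + b) * (lam * P) = (a * lam) * P + (b * P) * lam := by ring
    rw [this, hal, hbP, hw, hz, hPd]; ring
  rw [hR]
  have h1 : 0 ≤ a * s ^ 2 + b * t ^ 2 - 4 * (N - 1) * s * t := by
    have h : 0 ≤ a * (a * s ^ 2 + b * t ^ 2 - 4 * (N - 1) * s * t) := by
      have : a * (a * s ^ 2 + b * t ^ 2 - 4 * (N - 1) * s * t)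
        = (a * s - 2 * (N - 1) * t) ^ 2 := by linear_combination t ^ 2 * hab
      rw [this]; positivity
    exact nonneg_of_mul_nonneg_right h ha0
  have h2 : 0 ≤ (P + a) * u ^ 2 + 2 * C * u * v + (b - (N - 1) ^ 2 * lam) * v ^ 2 := by
    have hp : 0 < P + a := by positivity
    have h : 0 ≤ (P + a) * ((P + a) * u ^ 2 + 2 * C * u * v + (b - (N - 1) ^ 2 * lam) * v ^ 2) := by
      have : (P + a) * ((P + a) * u ^ 2 + 2 * C * u * v + (b - (N - 1) ^ 2 * lam) * v ^ 2)
        = ((P + a) * u + C * v) ^ 2 := by linear_combination v ^ 2 * hdet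
      rw [this]; positivity
    exact nonneg_of_mul_nonneg_right h hp
  rw [hs, ht] at h1
  rw [hC, hPd] at h2
  linarith
end
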